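/- Fix θ0, θT ∈ ℝ with 0 < θ0 < π and 0 < θT < 2π, suppose (a1, a3, c1, c3) solve the length-3 linear system, and set f(θ) = A(θ)² + C(θ)² and N = (cos(θ0/2) − cos(θT/2))³·(cos(3θ0/2) − cos(θT/2)). Then the second derivative of f satisfies f''(0) = (1/2)·N / (sin²(θ0)·cos²(θ0/2)·sin²(θT/2)) and f''(θ0) = 2·N / (sin²(θ0)·sin²(θT/2)). -/

import Mathlib

/-!
Write `p, q` for the cosine and sine of `θ0 / 2` and `u, v` for those of `θT / 2`; the hypotheses on
the angles make `p`, `q`, `v` nonzero. The linear system then determines its solution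
(`solve_system`): `a3 = (p - u) / (p q²)` and `c3 = (p - u)(p + u - 2 u p²) / (2 p² q³ v)`, with `a1`
and `c1` given by the interpolation equations. The second derivative of `f` is half of
`A'² + A A'' + C'² + C C''`, the derivatives being taken in `θ / 2` (`deriv_deriv_sq_add_sq`).
At `0` this is `(c1² - 1 - 2 a3) / 2`. At both points substituting the solution leaves a rational
function which is even in `q` and in `v`, so that `q² = 1 - p²` and `v² = 1 - u²` turn each claim
into a polynomial identity in `p` and `u`, where `cos (3 θ0 / 2) = 4 p³ - 3 p`.
-/

open Real

/-- The second derivative of `A² + C²`, with primes denoting derivatives with respect to `θ / 2`. -/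
lemma deriv_deriv_sq_add_sq (a1 a3 c1 c3 θ : ℝ) :
    deriv (deriv fun θ : ℝ => (a1 * cos (θ / 2) + a3 * cos (θ / 2) ^ 3) ^ 2
        + (c1 * sin (θ / 2) + c3 * sin (θ / 2) ^ 3) ^ 2) θ =
      (1 / 2) * ((sin (θ / 2) * (a1 + 3 * a3 * cos (θ / 2) ^ 2)) ^ 2
        + (a1 * cos (θ / 2) + a3 * cos (θ / 2) ^ 3)
          * (6 * a3 * cos (θ / 2) * sin (θ / 2) ^ 2
            - cos (θ / 2) * (a1 + 3 * a3 * cos (θ / 2) ^ 2))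
        + (cos (θ / 2) * (c1 + 3 * c3 * sin (θ / 2) ^ 2)) ^ 2
        + (c1 * sin (θ / 2) + c3 * sin (θ / 2) ^ 3)
          * (6 * c3 * sin (θ / 2) * cos (θ / 2) ^ 2
            - sin (θ / 2) * (c1 + 3 * c3 * sin (θ / 2) ^ 2))) := by
  have hc (x : ℝ) : HasDerivAt (fun y : ℝ => cos (y / 2)) (-sin (x / 2) * (1 / 2)) x :=
    ((hasDerivAt_id x).div_const 2).cos
  have hs (x : ℝ) : HasDerivAt (fun y : ℝ => sin (y / 2)) (cos (x / 2) * (1 / 2)) x :=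
    ((hasDerivAt_id x).div_const 2).sin
  have hfirst : (deriv fun θ : ℝ => (a1 * cos (θ / 2) + a3 * cos (θ / 2) ^ 3) ^ 2
        + (c1 * sin (θ / 2) + c3 * sin (θ / 2) ^ 3) ^ 2) = fun x : ℝ =>
      (c1 * sin (x / 2) + c3 * sin (x / 2) ^ 3)
          * (cos (x / 2) * (c1 + 3 * c3 * sin (x / 2) ^ 2))
        - (a1 * cos (x / 2) + a3 * cos (x / 2) ^ 3)
          * (sin (x / 2) * (a1 + 3 * a3 * cos (x / 2) ^ 2)) := by
    funext x
    have hA := (((hc x).const_mul a1).add (((hc x).pow 3).const_mul a3)).pow 2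
    have hC := (((hs x).const_mul c1).add (((hs x).pow 3).const_mul c3)).pow 2
    refine ((hA.add hC).congr_deriv ?_).deriv
    simp only [Pi.add_apply, Pi.pow_apply]
    push_cast
    ring
  rw [hfirst]
  have hA := ((hc θ).const_mul a1).add (((hc θ).pow 3).const_mul a3)
  have hC := ((hs θ).const_mul c1).add (((hs θ).pow 3).const_mul c3)
  have hA' := (hs θ).mul ((((hc θ).pow 2).const_mul (3 * a3)).const_add a1)
  have hC' := (hc θ).mul ((((hs θ).pow 2).const_mul (3 * c3)).const_add c1)
  refine (((hC.mul hC').sub (hA.mul hA')).congr_deriv ?_).deriv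
  simp only [Pi.add_apply, Pi.pow_apply, Pi.mul_apply]
  push_cast
  ring

lemma solve_system {p q u v a1 a3 c1 c3 : ℝ} (hp : p ≠ 0) (hq : q ≠ 0) (hv : v ≠ 0)
    (hpq : q ^ 2 = 1 - p ^ 2) (huv : v ^ 2 = 1 - u ^ 2)
    (e1 : a1 + a3 = 1) (e2 : a1 * p + a3 * p ^ 3 = u) (e3 : c1 * q + c3 * q ^ 3 = -v)
    (e4 : u * q * (a1 + 3 * a3 * p ^ 2) + v * p * (c1 + 3 * c3 * q ^ 2) = 0) :
    a3 = (p - u) / (p * q ^ 2) ∧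
      c3 = (p - u) * (p + u - 2 * u * p ^ 2) / (2 * p ^ 2 * q ^ 3 * v) := by
  have ha3 : a3 * (p * q ^ 2) = p - u := by
    linear_combination p * e1 - e2 + a3 * p * hpq
  refine ⟨by rw [eq_div_iff (by positivity), ha3], ?_⟩
  rw [eq_div_iff (by positivity)]
  linear_combination p * q * e4 - u * q ^ 2 * e2 - v * p ^ 2 * e3 - 2 * u * p ^ 2 * ha3
    - u ^ 2 * hpq + p ^ 2 * huv

/-- Second derivative of `f = A² + C²` for the length-3 composite gate solution, at
`θ = 0` and `θ = θ0`. -/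
theorem length_three_second_derivative (θ0 θT a1 a3 c1 c3 : ℝ)
    (hθ0 : 0 < θ0) (hθ0' : θ0 < π) (hθT : 0 < θT) (hθT' : θT < 2 * π)
    (e1 : a1 + a3 = 1)
    (e2 : a1 * cos (θ0 / 2) + a3 * cos (θ0 / 2) ^ 3 = cos (θT / 2))
    (e3 : c1 * sin (θ0 / 2) + c3 * sin (θ0 / 2) ^ 3 = -sin (θT / 2))
    (e4 : cos (θT / 2) * sin (θ0 / 2) * (a1 + 3 * a3 * cos (θ0 / 2) ^ 2)
        + sin (θT / 2) * cos (θ0 / 2) * (c1 + 3 * c3 * sin (θ0 / 2) ^ 2) = 0)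
    (f : ℝ → ℝ)
    (hf : ∀ θ : ℝ, f θ = (a1 * cos (θ / 2) + a3 * cos (θ / 2) ^ 3) ^ 2
        + (c1 * sin (θ / 2) + c3 * sin (θ / 2) ^ 3) ^ 2)
    (N : ℝ)
    (hN : N = (cos (θ0 / 2) - cos (θT / 2)) ^ 3 * (cos (3 * θ0 / 2) - cos (θT / 2))) :
    deriv (deriv f) 0 =
        (1 / 2) * N / (sin θ0 ^ 2 * cos (θ0 / 2) ^ 2 * sin (θT / 2) ^ 2) ∧
      deriv (deriv f) θ0 = 2 * N / (sin θ0 ^ 2 * sin (θT / 2) ^ 2) := by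
  have hp : cos (θ0 / 2) ≠ 0 := (cos_pos_of_mem_Ioo ⟨by linarith, by linarith⟩).ne'
  have hq : sin (θ0 / 2) ≠ 0 := (sin_pos_of_pos_of_lt_pi (by linarith) (by linarith)).ne'
  have hv : sin (θT / 2) ≠ 0 := (sin_pos_of_pos_of_lt_pi (by linarith) (by linarith)).ne'
  have hpq := sin_sq (θ0 / 2)
  have huv := sin_sq (θT / 2)
  have h3 : cos (3 * θ0 / 2) = 4 * cos (θ0 / 2) ^ 3 - 3 * cos (θ0 / 2) := by
    rw [← cos_three_mul]; ring_nf
  have h2 : sin θ0 = 2 * sin (θ0 / 2) * cos (θ0 / 2) := by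
    rw [← sin_two_mul]; ring_nf
  rw [funext hf, deriv_deriv_sq_add_sq, deriv_deriv_sq_add_sq, hN, h3, h2, e2, e3]
  simp only [zero_div, cos_zero, sin_zero]
  generalize cos (θ0 / 2) = p at *
  generalize sin (θ0 / 2) = q at *
  generalize cos (θT / 2) = u at *
  generalize sin (θT / 2) = v at *
  obtain ⟨ha3, hc3⟩ := solve_system hp hq hv hpq huv e1 e2 e3 e4
  have ha1 : a1 = 1 - a3 := by linear_combination e1
  have hc1 : c1 = -v / q - c3 * q ^ 2 := by
    field_simp
    linear_combination e3
  have hq4 : q ^ 4 = (1 - p ^ 2) ^ 2 := by rw [← hpq]; ring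
  have hq6 : q ^ 6 = (1 - p ^ 2) ^ 3 := by rw [← hpq]; ring
  have hv4 : v ^ 4 = (1 - u ^ 2) ^ 2 := by rw [← huv]; ring
  subst ha1 hc1
  rw [ha3, hc3]
  -- After clearing denominators both sides are even in `q` and `v`, hence polynomials in `p`, `u`.
  constructor
  · field_simp
    ring_nf
    simp only [huv, hq4, hq6, hv4]
    ring
  · field_simp
    ring_nf
    simp only [hpq, huv, hq4, hv4]
    ring
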